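/- In the online Ramsey game with targets red C₄ and blue P₆, consider the position in which the five edges v₁v₂, v₂v₃, v₃v₄, v₄v₅, v₅v₆ of a path on six distinct vertices have been colored blue, red, blue, red, blue respectively (case B9). From this position Builder can force a red copy of C₄ or a blue copy of P₆ within at most 6 additional rounds, so within at most 11 rounds in total. -/

import Mathlib

open SimpleGraph

/-- The set `S` of edges of the infinite complete graph on `ℕ` contains a copy of
the graph `G`: there is an injective map of the vertices of `G` into `ℕ` sending
every edge of `G` into `S`. -/
def HasCopy {V : Type*} (G : SimpleGraph V) (S : Set (Sym2 ℕ)) : Prop :=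
  ∃ f : V → ℕ, Function.Injective f ∧ ∀ a b, G.Adj a b → s(f a, f b) ∈ S

/-- `BuilderWinsIn G H R B r` means: in the online Ramsey game with targets a red copy
of `G` and a blue copy of `H`, from the position in which the edges in `R` have been
colored red and the edges in `B` have been colored blue, Builder has a strategy that
guarantees, against every Painter strategy, that within at most `r` further rounds the
colored edges contain a red copy of `G` or a blue copy of `H`.  (In each round Builder
chooses a previously unchosen non-loop edge of the infinite complete graph on `ℕ`, and
Painter immediately colors it red or blue; so Builder wins within `r + 1` rounds iff he
has already won, or he can choose an edge such that whichever color Painter gives it,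
he can win within `r` further rounds.) -/
def BuilderWinsIn {V W : Type*} (G : SimpleGraph V) (H : SimpleGraph W) :
    Set (Sym2 ℕ) → Set (Sym2 ℕ) → ℕ → Prop
  | R, B, 0 => HasCopy G R ∨ HasCopy H B
  | R, B, (r + 1) => HasCopy G R ∨ HasCopy H B ∨
      ∃ e : Sym2 ℕ, ¬ e.IsDiag ∧ e ∉ R ∧ e ∉ B ∧
        BuilderWinsIn G H (insert e R) B r ∧ BuilderWinsIn G H R (insert e B) r

/-- The online size Ramsey number `ř(G, H)`: the least `t` such that, starting from the
empty position, Builder can force a red copy of `G` or a blue copy of `H` within at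
most `t` rounds. -/
noncomputable def onlineRamsey {V W : Type*} (G : SimpleGraph V) (H : SimpleGraph W) : ℕ :=
  sInf {t | BuilderWinsIn G H ∅ ∅ t}

/-!
If blue contains two disjoint nontrivial paths on six vertices in total, each of the four edges
joining an end of one to an end of the other completes a blue `P₆`, while all four together form a
`C₄`. Painter is therefore forced, and if one of the four is already red, Builder wins within three
rounds. Three forced rounds are left after at most three others: Builder first chooses `v₁v₃`; a
blue answer yields the blue path `v₄v₃v₁v₂`, disjoint from `v₅v₆`. After a red answer he chooses
`v₁v₅`: a blue answer yields `v₂v₁v₅v₆`, disjoint from `v₃v₄`, and a red answer forces `v₂v₅` to be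
blue (against the red `v₁v₃v₂v₅`), which yields `v₁v₂v₅v₆`, disjoint from `v₃v₄`.
-/

section Copies

variable {V : Type*} {G : SimpleGraph V} {S : Set (Sym2 ℕ)}

lemma hasCopy_iff_isContained : HasCopy G S ↔ G ⊑ fromEdgeSet S := by
  constructor
  · rintro ⟨f, hf, hS⟩
    exact ⟨⟨⟨f, fun {a b} hab ↦ ⟨hS a b hab, hf.ne hab.ne⟩⟩, hf⟩⟩
  · rintro ⟨f⟩
    exact ⟨f, f.injective, fun a b hab ↦ (f.toHom.map_adj hab).1⟩

lemma hasCopy_pathGraph_of_isPath {n a b : ℕ} {p : (fromEdgeSet S).Walk a b} (hp : p.IsPath)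
    (hn : p.length + 1 = n) : HasCopy (pathGraph n) S :=
  hn ▸ hasCopy_iff_isContained.2 hp.isContained_pathGraph

lemma hasCopy_cycleGraph_four {a b c d : ℕ} (hnodup : [a, b, c, d].Nodup)
    (hab : s(a, b) ∈ S) (hbc : s(b, c) ∈ S) (hcd : s(c, d) ∈ S) (hda : s(d, a) ∈ S) :
    HasCopy (cycleGraph 4) S := by
  have adj {x y : ℕ} (h : s(x, y) ∈ S) (hne : x ≠ y) : (fromEdgeSet S).Adj x y := ⟨h, hne⟩
  rw [hasCopy_iff_isContained, cycleGraph_isContained_iff (by norm_num)]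
  refine ⟨a, .cons (adj hab (by grind)) (.cons (adj hbc (by grind)) (.cons (adj hcd (by grind))
    (.cons (adj hda (by grind)) .nil))), ?_, rfl⟩
  rw [Walk.cons_isCycle_iff, Walk.isPath_def]
  simp only [Walk.support_cons, Walk.support_nil, Walk.edges_cons, Walk.edges_nil]
  grind

lemma isPath_append_cons {a b c d : V} {p : G.Walk a b} {q : G.Walk c d}
    (hp : p.IsPath) (hq : q.IsPath) (hpq : p.support.Disjoint q.support) (h : G.Adj b c) :
    (p.append (.cons h q)).IsPath := by
  rw [Walk.isPath_def, Walk.support_append]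
  exact hp.support_nodup.append hq.support_nodup hpq

lemma hasCopy_pathGraph_insert {n a b c d : ℕ} {p : (fromEdgeSet S).Walk a b}
    {q : (fromEdgeSet S).Walk c d} (hp : p.IsPath) (hq : q.IsPath)
    (hpq : p.support.Disjoint q.support) (hn : p.length + q.length + 2 = n) :
    HasCopy (pathGraph n) (insert s(b, c) S) := by
  have hle : fromEdgeSet S ≤ fromEdgeSet (insert s(b, c) S) :=
    fromEdgeSet_mono (Set.subset_insert _ _)
  have hbc : (fromEdgeSet (insert s(b, c) S)).Adj b c :=
    ⟨Set.mem_insert _ _, fun h ↦ hpq p.end_mem_support (h ▸ q.start_mem_support)⟩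
  have hjoin := isPath_append_cons (hp.mapLe hle) (hq.mapLe hle) (by simpa using hpq) hbc
  exact hasCopy_pathGraph_of_isPath hjoin (by simp [← hn, add_assoc])

end Copies

namespace BuilderWinsIn

variable {V W : Type*} {G : SimpleGraph V} {H : SimpleGraph W} {R B : Set (Sym2 ℕ)} {r s : ℕ}

lemma of_hasCopy (h : HasCopy G R ∨ HasCopy H B) : BuilderWinsIn G H R B r := by
  cases r with
  | zero => exact h
  | succ r => exact h.elim .inl (.inr ∘ .inl)

lemma succ (h : BuilderWinsIn G H R B r) : BuilderWinsIn G H R B (r + 1) := by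
  induction r generalizing R B with
  | zero => exact of_hasCopy h
  | succ r ih =>
    obtain hG | hH | ⟨e, he, heR, heB, hred, hblue⟩ := h
    · exact of_hasCopy (.inl hG)
    · exact of_hasCopy (.inr hH)
    · exact .inr (.inr ⟨e, he, heR, heB, ih hred, ih hblue⟩)

lemma mono (hrs : r ≤ s) (h : BuilderWinsIn G H R B r) : BuilderWinsIn G H R B s :=
  Nat.le_induction h (fun _ _ ↦ succ) s hrs

-- If `e` is already colored, Builder saves a round, so `e` need not be a legal choice.
lemma succ_of_insert {e : Sym2 ℕ} (he : ¬ e.IsDiag) (hred : BuilderWinsIn G H (insert e R) B r)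
    (hblue : BuilderWinsIn G H R (insert e B) r) : BuilderWinsIn G H R B (r + 1) := by
  by_cases heR : e ∈ R
  · exact succ (Set.insert_eq_of_mem heR ▸ hred)
  by_cases heB : e ∈ B
  · exact succ (Set.insert_eq_of_mem heB ▸ hblue)
  exact .inr (.inr ⟨e, he, heR, heB, hred, hblue⟩)

lemma of_forced_red (T : Finset (Sym2 ℕ)) (hT : ∀ e ∈ T, ¬ e.IsDiag)
    (hblue : ∀ e ∈ T, HasCopy H (insert e B)) (hred : HasCopy G (R ∪ T)) :
    BuilderWinsIn G H R B T.card := by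
  induction T using Finset.induction_on generalizing R with
  | empty => exact of_hasCopy (.inl (by simpa using hred))
  | insert e T he ih =>
    rw [Finset.forall_mem_insert] at hT hblue
    rw [Finset.card_insert_of_notMem he]
    refine succ_of_insert hT.1 (ih hT.2 hblue.2 ?_) (of_hasCopy (.inr hblue.1))
    rwa [Finset.coe_insert, Set.union_insert, ← Set.insert_union] at hred

lemma of_disjoint_blue_paths {n a b c d : ℕ} {p : (fromEdgeSet B).Walk a b}
    {q : (fromEdgeSet B).Walk c d} (hp : p.IsPath) (hq : q.IsPath)
    (hpq : p.support.Disjoint q.support) (hn : p.length + q.length + 2 = n)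
    (hab : a ≠ b) (hcd : c ≠ d) (hred : s(a, c) ∈ R) :
    BuilderWinsIn (cycleGraph 4) (pathGraph n) R B 3 := by
  have hne {x y : ℕ} (hx : x ∈ p.support) (hy : y ∈ q.support) : x ≠ y :=
    fun h ↦ hpq hx (h ▸ hy)
  have hac := hne p.start_mem_support q.start_mem_support
  have had := hne p.start_mem_support q.end_mem_support
  have hbc := hne p.end_mem_support q.start_mem_support
  have hbd := hne p.end_mem_support q.end_mem_support
  refine mono Finset.card_le_three (of_forced_red {s(a, d), s(b, c), s(b, d)} ?_ ?_ ?_)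
  · simp [had, hbc, hbd]
  · simp only [Finset.forall_mem_insert, Finset.mem_singleton, forall_eq]
    refine ⟨?_, hasCopy_pathGraph_insert hp hq hpq hn, ?_⟩
    · exact hasCopy_pathGraph_insert hp.reverse hq.reverse (by simpa using hpq) (by simpa using hn)
    · exact hasCopy_pathGraph_insert hp hq.reverse (by simpa using hpq) (by simpa using hn)
  · exact hasCopy_cycleGraph_four (a := a) (b := c) (c := b) (d := d) (by grind)
      (.inl hred) (by simp [Sym2.eq_swap]) (by simp) (by simp [Sym2.eq_swap])

lemma of_blue_path_four_two {a b c d x y : ℕ} (hnodup : [a, b, c, d, x, y].Nodup)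
    (hab : s(a, b) ∈ B) (hbc : s(b, c) ∈ B) (hcd : s(c, d) ∈ B) (hxy : s(x, y) ∈ B)
    (hax : s(a, x) ∈ R) : BuilderWinsIn (cycleGraph 4) (pathGraph 6) R B 3 := by
  have adj {u w : ℕ} (h : s(u, w) ∈ B) (hne : u ≠ w) : (fromEdgeSet B).Adj u w := ⟨h, hne⟩
  let p : (fromEdgeSet B).Walk a d :=
    .cons (adj hab (by grind)) (.cons (adj hbc (by grind)) (.cons (adj hcd (by grind)) .nil))
  let q : (fromEdgeSet B).Walk x y := .cons (adj hxy (by grind)) .nil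
  have hp : p.IsPath := .mk' (by simp only [p, Walk.support_cons, Walk.support_nil]; grind)
  have hq : q.IsPath := .mk' (by simp only [q, Walk.support_cons, Walk.support_nil]; grind)
  have hpq : p.support.Disjoint q.support := by
    simp only [p, q, Walk.support_cons, Walk.support_nil, List.Disjoint]
    grind
  exact of_disjoint_blue_paths hp hq hpq rfl (by grind) (by grind) hax

end BuilderWinsIn

/-- Case `B9`: in the online Ramsey game with targets red `C₄` and blue `P₆`,
from the position in which the five edges `v₁v₂, v₂v₃, v₃v₄, v₄v₅, v₅v₆` of a path on
six distinct vertices have been colored blue, red, blue, red, blue respectively,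
Builder can force a red copy of `C₄` or a blue copy of `P₆` within at most 6 additional
rounds (so within at most 11 rounds in total). -/
theorem builder_wins_case_B9 (v : Fin 6 → ℕ) (hv : Function.Injective v) :
    BuilderWinsIn (cycleGraph 4) (pathGraph 6)
      {s(v 1, v 2), s(v 3, v 4)}
      {s(v 0, v 1), s(v 2, v 3), s(v 4, v 5)} 6 := by
  have not_isDiag {i j : Fin 6} (hij : i ≠ j) : ¬ s(v i, v j).IsDiag := by simpa using hv.ne hij
  have nodup {l : List (Fin 6)} (hl : l.Nodup) : (l.map v).Nodup := hl.map hv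
  refine .succ_of_insert (e := s(v 0, v 2)) (not_isDiag (by decide)) ?_ ?_
  · refine .succ_of_insert (e := s(v 0, v 4)) (not_isDiag (by decide)) ?_ ?_
    · refine .succ_of_insert (e := s(v 1, v 4)) (not_isDiag (by decide))
        (.of_hasCopy (.inl ?_)) ?_
      · apply hasCopy_cycleGraph_four (nodup (l := [0, 2, 1, 4]) (by decide)) <;>
          simp [Sym2.eq_swap]
      · apply BuilderWinsIn.of_blue_path_four_two (nodup (l := [0, 1, 4, 5, 2, 3]) (by decide)) <;>
          simp
    · apply BuilderWinsIn.mono (r := 3) (by norm_num)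
      apply BuilderWinsIn.of_blue_path_four_two (nodup (l := [1, 0, 4, 5, 2, 3]) (by decide)) <;>
        simp [Sym2.eq_swap]
  · apply BuilderWinsIn.mono (r := 3) (by norm_num)
    apply BuilderWinsIn.of_blue_path_four_two (nodup (l := [3, 2, 0, 1, 4, 5]) (by decide)) <;>
      simp [Sym2.eq_swap]
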